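/- arXiv:1402.3573 — 2 statements merged into one kernel-verified Lean document; each statement's English description precedes it below -/
import Mathlib

section
/- Let G be a finite simple graph and T a tree 3-spanner of G. Suppose u lies on the path in T between vertices p and q, and neither p nor q belongs to the closed T-neighborhood of u. Then every path from p to q in G contains a vertex in the closed T-neighborhood of u. -/
/-!
If an edge `xy` of `G` joins two vertices at `T`-distance at least `2` from `u`, then a shortest
`T`-walk from `x` to `y`, having length at most `3`, cannot pass through `u`. Replacing every edge
of a `G`-walk that misses `N_T[u]` by such a detour yields a `T`-walk missing `u`, which is
impossible when `u` separates the endpoints in `T`. The same argument with radius `r` in place of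
`1` works as soon as the detours have length at most `2 * r + 1`.
-/

section

open SimpleGraph

variable {V : Type*} {G T : SimpleGraph V} {p q u x y : V} {r : ℕ}

theorem walk_support_subset_of_isAcyclic_of_isPath (hT : T.IsAcyclic) {P : T.Walk p q}
    (hP : P.IsPath) (W : T.Walk p q) : P.support ⊆ W.support := by
  classical
  have hPW : P = W.bypass := congrArg Subtype.val <|
    (hT.subsingleton_path p q).elim ⟨P, hP⟩ ⟨W.bypass, W.bypass_isPath⟩
  exact hPW ▸ W.support_bypass_subset_support

theorem exists_isPath_mem_support_of_dist_add_dist_eq (hpu : T.Reachable p u)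
    (huq : T.Reachable u q) (hu : T.dist p u + T.dist u q = T.dist p q) :
    ∃ P : T.Walk p q, P.IsPath ∧ u ∈ P.support := by
  obtain ⟨A, hA⟩ := hpu.exists_walk_length_eq_dist
  obtain ⟨B, hB⟩ := huq.exists_walk_length_eq_dist
  refine ⟨A.append B, Walk.isPath_of_length_eq_dist _ ?_, ?_⟩
  · rw [Walk.length_append, hA, hB, hu]
  · exact (Walk.mem_support_append_iff _ _).mpr (.inl A.end_mem_support)

theorem mem_support_of_isTree_of_dist_add_dist_eq (hT : T.IsTree)
    (hu : T.dist p u + T.dist u q = T.dist p q) (W : T.Walk p q) : u ∈ W.support := by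
  obtain ⟨P, hP, huP⟩ :=
    exists_isPath_mem_support_of_dist_add_dist_eq (hT.connected p u) (hT.connected u q) hu
  exact walk_support_subset_of_isAcyclic_of_isPath hT.isAcyclic hP W huP

theorem edist_le_of_adj_of_dist_le_mul_dist {t : ℕ} (hreach : T.Reachable x y)
    (hspan : T.dist x y ≤ t * G.dist x y) (hxy : G.Adj x y) : T.edist x y ≤ t := by
  rw [dist_eq_one_iff_adj.mpr hxy, mul_one] at hspan
  rw [← hreach.coe_dist_eq_edist]
  exact_mod_cast hspan

theorem edist_add_edist_le_length_of_mem_support {W : T.Walk x y} (hu : u ∈ W.support) :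
    T.edist u x + T.edist u y ≤ W.length := by
  classical
  calc T.edist u x + T.edist u y
      ≤ (W.takeUntil u hu).length + (W.dropUntil u hu).length :=
        add_le_add (edist_comm.trans_le (edist_le _)) (edist_le _)
    _ = W.length := by rw [← Nat.cast_add, ← Walk.length_append, W.take_spec]

theorem exists_walk_notMem_support_of_edist_le (hxy : T.edist x y ≤ (2 * r + 1 : ℕ))
    (hx : r < T.edist u x) (hy : r < T.edist u y) : ∃ W : T.Walk x y, u ∉ W.support := by
  have hreach : T.Reachable x y :=
    reachable_of_edist_ne_top (ne_top_of_le_ne_top (ENat.natCast_ne_top _) hxy)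
  obtain ⟨W, hW⟩ := hreach.exists_walk_length_eq_edist
  refine ⟨W, fun hu ↦ ?_⟩
  have hlong : ((r + 1 + (r + 1) : ℕ) : ℕ∞) ≤ (2 * r + 1 : ℕ) := calc
    ((r + 1 + (r + 1) : ℕ) : ℕ∞)
      ≤ T.edist u x + T.edist u y := by
        push_cast
        exact add_le_add (Order.add_one_le_of_lt hx) (Order.add_one_le_of_lt hy)
    _ ≤ W.length := edist_add_edist_le_length_of_mem_support hu
    _ ≤ (2 * r + 1 : ℕ) := hW.trans_le hxy
  have := Nat.cast_le.mp hlong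
  omega

theorem exists_walk_notMem_support_of_forall_lt_edist
    (hGT : ∀ x y, G.Adj x y → T.edist x y ≤ (2 * r + 1 : ℕ)) (P : G.Walk p q)
    (hP : ∀ w ∈ P.support, r < T.edist u w) : ∃ W : T.Walk p q, u ∉ W.support := by
  induction P with
  | nil =>
    refine ⟨.nil, fun hu ↦ ?_⟩
    obtain rfl := Walk.mem_support_nil_iff.mp hu
    simpa using hP u hu
  | cons hadj P ih =>
    rw [Walk.support_cons, List.forall_mem_cons] at hP
    obtain ⟨D, hD⟩ :=
      exists_walk_notMem_support_of_edist_le (hGT _ _ hadj) hP.1 (hP.2 _ P.start_mem_support)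
    obtain ⟨W, hW⟩ := ih hP.2
    exact ⟨D.append W, by simp [Walk.mem_support_append_iff, hD, hW]⟩

theorem stmt_2_general (hGT : ∀ x y, G.Adj x y → T.edist x y ≤ (2 * r + 1 : ℕ))
    (hu : ∀ W : T.Walk p q, u ∈ W.support) (P : G.Walk p q) :
    ∃ w ∈ P.support, T.edist u w ≤ r := by
  by_contra! hP
  obtain ⟨W, hW⟩ := exists_walk_notMem_support_of_forall_lt_edist hGT P hP
  exact hW (hu W)

end

/-- If `u` lies on the `T`-path between `p` and `q` and neither `p` nor `q` is in `N_T[u]`,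
then every path from `p` to `q` in `G` contains a vertex of `N_T[u]`. -/
theorem stmt_2 {V : Type*} [Fintype V] (G T : SimpleGraph V)
    (hle : T ≤ G) (hT : T.IsTree)
    (hspan : ∀ x y : V, T.dist x y ≤ 3 * G.dist x y)
    (p q u : V)
    (hu : T.dist p u + T.dist u q = T.dist p q)
    (hp : p ≠ u ∧ ¬ T.Adj u p) (hq : q ≠ u ∧ ¬ T.Adj u q) :
    ∀ P : G.Walk p q, P.IsPath → ∃ w ∈ P.support, w = u ∨ T.Adj u w := by
  intro P _
  obtain ⟨w, hw, huw⟩ := stmt_2_general (r := 1)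
    (fun x y ↦ edist_le_of_adj_of_dist_le_mul_dist (hT.connected x y) (hspan x y))
    (mem_support_of_isTree_of_dist_add_dist_eq hT hu) P
  exact ⟨w, hw, (SimpleGraph.edist_le_one_iff_adj_or_eq.mp huw).symm.imp_left Eq.symm⟩
end

section
/- Let G be a finite simple graph, uv an edge of G, and T a tree 3-spanner of G with 5-center {u,v}. Then every connected component Q of G \ N_G[u,v] is placed entirely on one side of the edge uv in T: either every vertex of Q is strictly closer in T to u than to v, or every vertex of Q is strictly closer in T to v than to u. -/
/-!
Deleting the edge `uv` splits the tree `T` into the vertices closer to `u` and those closer to `v`,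
and the `T`-path between vertices `x` and `y` on opposite sides runs through `uv`, so that
`d_T(x, y) = d_T(u, x) + 1 + d_T(v, y)`. When `x` and `y` lie outside the closed neighbourhoods of
`u` and `v`, this is at least `2 + 1 + 2 = 5`, too long for `xy` to be an edge of `G`. Outside the
balls of radius `r` it is at least `2 * r + 3`, so a tree `(2 * r + 2)`-spanner is enough there.
-/

section Distances

variable {V : Type*} {G : SimpleGraph V} {u v w x y : V}

theorem one_lt_dist_iff (hG : G.Connected) :
    1 < G.dist u w ↔ w ≠ u ∧ ¬ G.Adj u w := by
  refine ⟨fun h => ⟨?_, fun hadj => ?_⟩,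
    fun h => hG.one_lt_dist_of_ne_of_not_adj h.1.symm h.2⟩
  · rintro rfl
    simp at h
  · exact h.ne' (SimpleGraph.dist_eq_one_iff_adj.2 hadj)

theorem dist_add_dist_of_mem_support {p : G.Walk x y} (hp : p.length = G.dist x y)
    (hw : w ∈ p.support) : G.dist x w + G.dist w y = G.dist x y := by
  classical
  have hlength : (p.takeUntil w hw).length + (p.dropUntil w hw).length = p.length := by
    rw [← SimpleGraph.Walk.length_append, p.take_spec hw]
  have hxw := SimpleGraph.dist_le (p.takeUntil w hw)
  have hwy := SimpleGraph.dist_le (p.dropUntil w hw)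
  have htriangle := (p.takeUntil w hw).reachable.dist_triangle_left y
  omega

theorem isPath_append_cons {p : G.Walk x u} {q : G.Walk v y} (hp : p.IsPath) (hq : q.IsPath)
    (huv : G.Adj u v) (hpq : p.support.Disjoint q.support) :
    (p.append (.cons huv q)).IsPath := by
  rw [SimpleGraph.Walk.isPath_def, SimpleGraph.Walk.support_append,
    SimpleGraph.Walk.support_cons, List.tail_cons]
  exact hp.support_nodup.append hq.support_nodup hpq

theorem length_eq_dist_of_isPath (hG : G.IsAcyclic) {p : G.Walk x y} (hp : p.IsPath) :
    p.length = G.dist x y := by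
  obtain ⟨q, hq, hlength⟩ := p.reachable.exists_path_of_dist
  have hpq : p = q := congrArg Subtype.val ((hG.subsingleton_path x y).elim ⟨p, hp⟩ ⟨q, hq⟩)
  rw [hpq, hlength]

end Distances

section Sides

variable {V : Type*} {G : SimpleGraph V} {u v x y : V}

/-- The vertices of `G` strictly closer to `u` than to `v`. When `uv` is an edge of a tree, this is
the side of `u` after that edge is deleted. -/
def closerSet (G : SimpleGraph V) (u v : V) : Set V :=
  {w | G.dist u w < G.dist v w}

theorem mem_closerSet {w : V} : w ∈ closerSet G u v ↔ G.dist u w < G.dist v w :=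
  Iff.rfl

theorem disjoint_closerSet (G : SimpleGraph V) (u v : V) :
    Disjoint (closerSet G u v) (closerSet G v u) :=
  Set.disjoint_left.2 fun _ hu hv => lt_asymm (mem_closerSet.1 hu) (mem_closerSet.1 hv)

theorem mem_closerSet_of_mem_support {p : G.Walk u x} (hp : p.length = G.dist u x)
    (hx : x ∈ closerSet G u v) {w : V} (hw : w ∈ p.support) : w ∈ closerSet G u v := by
  classical
  have hgeodesic := dist_add_dist_of_mem_support hp hw
  have htriangle := (p.dropUntil w hw).reachable.dist_triangle_right v
  rw [mem_closerSet] at hx ⊢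
  omega

theorem reachable_of_mem_closerSet (huv : G.Adj u v) (hx : x ∈ closerSet G u v) :
    G.Reachable u x :=
  huv.reachable.trans (.of_dist_ne_zero (Nat.ne_zero_of_lt hx))

theorem dist_eq_of_mem_closerSet (hG : G.IsAcyclic) (huv : G.Adj u v)
    (hx : x ∈ closerSet G u v) (hy : y ∈ closerSet G v u) :
    G.dist x y = G.dist u x + 1 + G.dist v y := by
  obtain ⟨p, hp, hpl⟩ := (reachable_of_mem_closerSet huv hx).exists_path_of_dist
  obtain ⟨q, hq, hql⟩ := (reachable_of_mem_closerSet huv.symm hy).exists_path_of_dist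
  have hdisjoint : p.reverse.support.Disjoint q.support := by
    intro w hwp hwq
    rw [SimpleGraph.Walk.support_reverse, List.mem_reverse] at hwp
    exact (disjoint_closerSet G u v).notMem_of_mem_left
      (mem_closerSet_of_mem_support hpl hx hwp) (mem_closerSet_of_mem_support hql hy hwq)
  rw [← length_eq_dist_of_isPath hG (isPath_append_cons hp.reverse hq huv hdisjoint),
    SimpleGraph.Walk.length_append, SimpleGraph.Walk.length_cons,
    SimpleGraph.Walk.length_reverse, hpl, hql]
  omega

theorem compl_closerSet (hG : G.IsTree) (huv : G.Adj u v) :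
    (closerSet G u v)ᶜ = closerSet G v u := by
  ext w
  have hne : G.dist v w ≠ G.dist u w := by
    simpa only [G.dist_comm] using hG.dist_ne_of_adj w huv.symm
  rw [Set.mem_compl_iff, mem_closerSet, mem_closerSet, not_lt]
  exact hne.le_iff_lt

theorem mem_closerSet_of_dist_le (hG : G.IsTree) (huv : G.Adj u v) {r : ℕ}
    (hux : r < G.dist u x) (hvy : r < G.dist v y) (hxy : G.dist x y ≤ 2 * r + 2)
    (hx : x ∈ closerSet G u v) : y ∈ closerSet G u v := by
  by_contra hy
  rw [← Set.mem_compl_iff, compl_closerSet hG huv] at hy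
  have hcross := dist_eq_of_mem_closerSet hG.isAcyclic huv hx hy
  omega

end Sides

section Components

variable {V : Type*} {G : SimpleGraph V}

theorem supp_subset_or_supp_subset_compl {A : Set V}
    (hA : ∀ ⦃x y⦄, G.Adj x y → x ∈ A → y ∈ A) (Q : G.ConnectedComponent) :
    Q.supp ⊆ A ∨ Q.supp ⊆ Aᶜ := by
  by_contra! h
  obtain ⟨⟨y, hyQ, hyA⟩, ⟨x, hxQ, hxA⟩⟩ := And.imp Set.not_subset.1 Set.not_subset.1 h
  obtain ⟨p⟩ := SimpleGraph.ConnectedComponent.exact (hxQ.trans hyQ.symm)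
  obtain ⟨d, -, hfst, hsnd⟩ := p.exists_boundary_dart A (not_not.1 hxA) hyA
  exact hsnd (hA d.adj hfst)

end Components

theorem stmt_6_general {V : Type*} (G T : SimpleGraph V) (u v : V) (r : ℕ)
    (hle : T ≤ G) (hT : T.IsTree)
    (hspan : ∀ x y : V, T.dist x y ≤ (2 * r + 2) * G.dist x y)
    (hadj : T.Adj u v)
    (S : Set V) (hS : S = {w | r < G.dist u w ∧ r < G.dist v w})
    (Q : (G.induce S).ConnectedComponent) :
    (∀ w : S, (G.induce S).connectedComponentMk w = Q → T.dist u ↑w < T.dist v ↑w) ∨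
    (∀ w : S, (G.induce S).connectedComponentMk w = Q → T.dist v ↑w < T.dist u ↑w) := by
  have hfar (w : S) : r < T.dist u w ∧ r < T.dist v w := by
    obtain ⟨hu, hv⟩ := hS.subset w.2
    exact ⟨hu.trans_le ((hT.connected u w).dist_anti hle),
      hv.trans_le ((hT.connected v w).dist_anti hle)⟩
  have hclosed ⦃x y : S⦄ (hxy : (G.induce S).Adj x y) :
      (x : V) ∈ closerSet T u v → (y : V) ∈ closerSet T u v := by
    have hG : G.dist (x : V) y = 1 := SimpleGraph.dist_eq_one_iff_adj.2 hxy
    have hdist : T.dist (x : V) y ≤ 2 * r + 2 := by simpa only [hG, mul_one] using hspan x y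
    exact mem_closerSet_of_dist_le hT hadj (hfar x).1 (hfar y).2 hdist
  have hside := supp_subset_or_supp_subset_compl (A := (↑) ⁻¹' closerSet T u v) hclosed Q
  rwa [← Set.preimage_compl, compl_closerSet hT hadj] at hside

/-- Every component of `G \ N_G[u,v]` lies entirely on one side of the central edge `uv`
of a tree 3-spanner `T` with 5-center `{u,v}`. -/
theorem stmt_6 {V : Type*} [Fintype V] (G T : SimpleGraph V) (u v : V)
    (huv : G.Adj u v) (hle : T ≤ G) (hT : T.IsTree)
    (hspan : ∀ x y : V, T.dist x y ≤ 3 * G.dist x y)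
    (hadj : T.Adj u v)
    (hcenter : ∀ w : V, T.dist u w ≤ 2 ∨ T.dist v w ≤ 2)
    (S : Set V) (hS : S = {w | ¬ (w = u ∨ w = v ∨ G.Adj u w ∨ G.Adj v w)})
    (Q : (G.induce S).ConnectedComponent) :
    (∀ w : S, (G.induce S).connectedComponentMk w = Q → T.dist u ↑w < T.dist v ↑w) ∨
    (∀ w : S, (G.induce S).connectedComponentMk w = Q → T.dist v ↑w < T.dist u ↑w) := by
  refine stmt_6_general G T u v 1 hle hT (fun x y => (hspan x y).trans (by gcongr; norm_num)) hadj
    S (hS.trans ?_) Q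
  grind [one_lt_dist_iff (hT.connected.mono hle)]
end
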